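/- The set 𝕍 of interval-values is closed under both shift operations: for all A, B ∈ 𝕍, Lshift(A,B) ∈ 𝕍 and Rshift(A,B) ∈ 𝕍. -/

import Mathlib

/-- An interval-value: a finite union of half-open intervals `[a, b)` with
`0 ≤ a < b ≤ 1`, regarded as a subset of `[0, 1)`. -/
def IsIntervalValue (A : Set ℝ) : Prop :=
  ∃ s : Finset (ℝ × ℝ),
    (∀ p ∈ s, 0 ≤ p.1 ∧ p.1 < p.2 ∧ p.2 ≤ 1) ∧
    A = ⋃ p ∈ s, Set.Ico p.1 p.2

open Classical in
/-- `Flength A`: the length of the first (left-most) component of `A`.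
For a nonempty interval-value `A` the first component is `[t, s)` where
`t = sInf A` and `s` is the supremum of those `x` with `[t, x) ⊆ A`;
`Flength ∅ = 0`. -/
noncomputable def Flength (A : Set ℝ) : ℝ :=
  if A.Nonempty then sSup {x : ℝ | Set.Ico (sInf A) x ⊆ A} - sInf A else 0

/-- `Lshift(A,B)(x) = A(x + Flength B)` if `0 ≤ x + Flength B < 1`, and `0`
otherwise (as characteristic functions on `[0,1)`). -/
noncomputable def Lshift (A B : Set ℝ) : Set ℝ :=
  {x : ℝ | x ∈ Set.Ico (0:ℝ) 1 ∧ 0 ≤ x + Flength B ∧ x + Flength B < 1 ∧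
    x + Flength B ∈ A}

/-- `Rshift(A,B)(x) = A(frac (x − Flength B))`, a circular right shift
(as characteristic functions on `[0,1)`). -/
noncomputable def Rshift (A B : Set ℝ) : Set ℝ :=
  {x : ℝ | x ∈ Set.Ico (0:ℝ) 1 ∧ Int.fract (x - Flength B) ∈ A}

theorem IsIntervalValue.union {A B : Set ℝ} (hA : IsIntervalValue A) (hB : IsIntervalValue B) :
    IsIntervalValue (A ∪ B) := by
  classical
  obtain ⟨s, hs, rfl⟩ := hA
  obtain ⟨t, ht, rfl⟩ := hB
  refine ⟨s ∪ t, ?_, ?_⟩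
  · intro p hp
    rcases Finset.mem_union.1 hp with h | h
    · exact hs p h
    · exact ht p h
  · rw [Finset.set_biUnion_union]

theorem IsIntervalValue.subset {A : Set ℝ} (hA : IsIntervalValue A) {x : ℝ} (hx : x ∈ A) :
    0 ≤ x ∧ x < 1 := by
  obtain ⟨s, hs, rfl⟩ := hA
  simp only [Set.mem_iUnion, Set.mem_Ico] at hx
  obtain ⟨p, hp, h1, h2⟩ := hx
  have := hs p hp
  constructor <;> linarith

/-- Translating an interval-value and cutting it to the unit interval. -/
theorem IsIntervalValue.translate {A : Set ℝ} (hA : IsIntervalValue A) (c : ℝ) :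
    IsIntervalValue {x : ℝ | x ∈ Set.Ico (0:ℝ) 1 ∧ x + c ∈ A} := by
  classical
  obtain ⟨s, hs, rfl⟩ := hA
  refine ⟨(s.image fun p => (max 0 (p.1 - c), min 1 (p.2 - c))).filter fun p => p.1 < p.2, ?_, ?_⟩
  · intro p hp
    obtain ⟨h1, h2⟩ := Finset.mem_filter.1 hp
    obtain ⟨q, hq, rfl⟩ := Finset.mem_image.1 h1
    exact ⟨le_max_left _ _, h2, min_le_left _ _⟩
  · ext x
    simp only [Set.mem_setOf_eq, Set.mem_iUnion, Set.mem_Ico, Finset.mem_filter,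
      Finset.mem_image, exists_prop]
    constructor
    · rintro ⟨⟨h0, h1⟩, p, hp, h2, h3⟩
      have ha : max 0 (p.1 - c) ≤ x := max_le h0 (by linarith)
      have hb : x < min 1 (p.2 - c) := lt_min h1 (by linarith)
      exact ⟨_, ⟨⟨p, hp, rfl⟩, lt_of_le_of_lt ha hb⟩, ha, hb⟩
    · rintro ⟨_, ⟨⟨p, hp, rfl⟩, -⟩, ha, hb⟩
      obtain ⟨h0, h2⟩ := max_le_iff.1 ha
      obtain ⟨h1, h3⟩ := lt_min_iff.1 hb
      exact ⟨⟨h0, h1⟩, p, hp, by linarith, by linarith⟩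

/-- `𝕍` is closed under both shift operations: for all interval-values `A, B`,
both `Lshift(A,B)` and `Rshift(A,B)` are interval-values. -/
theorem intervalValues_closed_under_shifts (A B : Set ℝ)
    (hA : IsIntervalValue A) (hB : IsIntervalValue B) :
    IsIntervalValue (Lshift A B) ∧ IsIntervalValue (Rshift A B) := by
  constructor
  · convert hA.translate (Flength B) using 1
    ext x
    constructor
    · rintro ⟨h, -, -, h'⟩
      exact ⟨h, h'⟩
    · rintro ⟨h, h'⟩
      exact ⟨h, (hA.subset h').1, (hA.subset h').2, h'⟩
  · convert (hA.translate (-Int.fract (Flength B))).union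
      (hA.translate (1 - Int.fract (Flength B))) using 1
    ext x
    simp only [Rshift, Set.mem_union, Set.mem_setOf_eq, ← and_or_left]
    refine and_congr_right fun hx => ?_
    have e := Int.floor_add_fract (Flength B)
    have f0 := Int.fract_nonneg (Flength B)
    have f1 := Int.fract_lt_one (Flength B)
    obtain ⟨hx0, hx1⟩ := hx
    have k1 : 0 ≤ x + -Int.fract (Flength B) → x + -Int.fract (Flength B) < 1 →
        Int.fract (x - Flength B) = x + -Int.fract (Flength B) := fun a b =>
      Int.fract_eq_iff.2 ⟨a, b, -⌊Flength B⌋, by push_cast; linarith⟩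
    have k2 : 0 ≤ x + (1 - Int.fract (Flength B)) → x + (1 - Int.fract (Flength B)) < 1 →
        Int.fract (x - Flength B) = x + (1 - Int.fract (Flength B)) := fun a b =>
      Int.fract_eq_iff.2 ⟨a, b, -⌊Flength B⌋ - 1, by push_cast; linarith⟩
    constructor
    · intro h
      rcases le_or_gt (Int.fract (Flength B)) x with hc | hc
      · left
        rwa [← k1 (by linarith) (by linarith)]
      · right
        rwa [← k2 (by linarith) (by linarith)]
    · rintro (h | h)
      · rwa [k1 (hA.subset h).1 (hA.subset h).2]
      · rwa [k2 (hA.subset h).1 (hA.subset h).2]
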